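/- There exists a (unique) F-algebra homomorphism ι: □_q → ⊠_q that sends x_i ↦ x_{i,i+1} for all i ∈ ℤ/4ℤ, and it satisfies ρ_⊠ ∘ ι = ι ∘ ρ_□, where ρ_□ is the automorphism of □_q sending x_i ↦ x_{i+1} and ρ_⊠ is the automorphism of ⊠_q sending each generator x_{ij} ↦ x_{i+1,j+1}. -/

import Mathlib

/-!
The relations of `□_q` hold among the elements `x_{i,i+1}` of `⊠_q`: the first is the `q`-Weyl
relation for the consecutive pairs `(i, i+1)`, `(i+1, i+2)`, and the second is the cubic
`q`-Serre relation for the chain `i, i+1, i+2, i+3`. This is `tg01_respects`, and the universal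
property of the presentation gives the homomorphism. Algebra maps out of `□_q` are determined by
the images of the `x_i` (`BoxQ.algHom_ext`), which gives uniqueness, and also `ρ ∘ ι = ι ∘ ρ`, since
both sides send `x_i` to `x_{i+1,i+2}`.
-/

noncomputable section

open FreeAlgebra

variable (F : Type) [Field F]

/-- The defining relations of the algebra `□_q` (Terwilliger), on the free algebra
with generators `x_i`, `i ∈ ℤ/4ℤ`. -/
inductive BoxRel (q : F) : FreeAlgebra F (ZMod 4) → FreeAlgebra F (ZMod 4) → Prop
  | rel1 (i : ZMod 4) : BoxRel q
      (q • (ι F i * ι F (i + 1)) - q⁻¹ • (ι F (i + 1) * ι F i))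
      ((q - q⁻¹) • (1 : FreeAlgebra F (ZMod 4)))
  | rel2 (i : ZMod 4) : BoxRel q
      (ι F i ^ 3 * ι F (i + 2) +
        ((q ^ 3 - (q⁻¹) ^ 3) / (q - q⁻¹)) • (ι F i * ι F (i + 2) * ι F i ^ 2))
      (((q ^ 3 - (q⁻¹) ^ 3) / (q - q⁻¹)) • (ι F i ^ 2 * ι F (i + 2) * ι F i) +
        ι F (i + 2) * ι F i ^ 3)

/-- The algebra `□_q`, presented by generators and relations. -/
abbrev BoxQ (q : F) : Type := RingQuot (BoxRel F q)

/-- The generators `x_i` of `□_q`. -/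
def bx (q : F) (i : ZMod 4) : BoxQ F q :=
  RingQuot.mkAlgHom F (BoxRel F q) (ι F i)

/-- Index set for the generators `x_{ij}` of the `q`-tetrahedron algebra:
pairs `(i,j)` of elements of `ℤ/4ℤ` with `j - i ∈ {1, 2}`. -/
def TIdx : Type := {p : ZMod 4 × ZMod 4 // p.2 - p.1 = 1 ∨ p.2 - p.1 = 2}

/-- The defining relations of the `q`-tetrahedron algebra `⊠_q`. -/
inductive TetRel (q : F) : FreeAlgebra F TIdx → FreeAlgebra F TIdx → Prop
  | inv (i j : ZMod 4) (h : j - i = 2) (h' : i - j = 2) :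
      TetRel q (ι F ⟨(i, j), Or.inr h⟩ * ι F ⟨(j, i), Or.inr h'⟩)
        (1 : FreeAlgebra F TIdx)
  | qrel (p r : TIdx) (hpr : p.val.2 = r.val.1)
      (hne : ¬(p.val.2 - p.val.1 = 2 ∧ r.val.2 - r.val.1 = 2)) :
      TetRel q (q • (ι F p * ι F r) - q⁻¹ • (ι F r * ι F p))
        ((q - q⁻¹) • (1 : FreeAlgebra F TIdx))
  | serre (h i j k : ZMod 4) (h1 : i - h = 1) (h2 : j - i = 1) (h3 : k - j = 1) :
      TetRel q
        (ι F ⟨(h, i), Or.inl h1⟩ ^ 3 * ι F ⟨(j, k), Or.inl h3⟩ +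
          ((q ^ 3 - (q⁻¹) ^ 3) / (q - q⁻¹)) •
            (ι F ⟨(h, i), Or.inl h1⟩ * ι F ⟨(j, k), Or.inl h3⟩ * ι F ⟨(h, i), Or.inl h1⟩ ^ 2))
        (((q ^ 3 - (q⁻¹) ^ 3) / (q - q⁻¹)) •
            (ι F ⟨(h, i), Or.inl h1⟩ ^ 2 * ι F ⟨(j, k), Or.inl h3⟩ * ι F ⟨(h, i), Or.inl h1⟩) +
          ι F ⟨(j, k), Or.inl h3⟩ * ι F ⟨(h, i), Or.inl h1⟩ ^ 3)

/-- The `q`-tetrahedron algebra `⊠_q`. -/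
abbrev TetQ (q : F) : Type := RingQuot (TetRel F q)

/-- The generators `x_{ij}` of `⊠_q`. -/
def tg (q : F) (p : TIdx) : TetQ F q :=
  RingQuot.mkAlgHom F (TetRel F q) (ι F p)

/-- Shifting a generator index: `(i,j) ↦ (i+1, j+1)`. -/
def tshift (p : TIdx) : TIdx :=
  ⟨(p.val.1 + 1, p.val.2 + 1), by
    have h : p.val.2 + 1 - (p.val.1 + 1) = p.val.2 - p.val.1 := by ring
    rw [h]; exact p.prop⟩

/-- The generator `x_{i,i+1}` of `⊠_q`. -/
def tg01 (q : F) (i : ZMod 4) : TetQ F q :=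
  tg F q ⟨(i, i + 1), Or.inl (by ring)⟩

theorem BoxQ.algHom_ext {A : Type*} [Semiring A] [Algebra F A] (q : F)
    {f g : BoxQ F q →ₐ[F] A} (h : ∀ i, f (bx F q i) = g (bx F q i)) : f = g := by
  apply RingQuot.ringQuot_ext'
  apply FreeAlgebra.hom_ext
  funext i
  exact h i

/-- The elements `x_{i,i+1}` of `⊠_q` satisfy the defining relations of `□_q`. -/
theorem tg01_respects (q : F) {a b : FreeAlgebra F (ZMod 4)} (h : BoxRel F q a b) :
    FreeAlgebra.lift F (tg01 F q) a = FreeAlgebra.lift F (tg01 F q) b := by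
  cases h with
  | rel1 i =>
    have key := RingQuot.mkAlgHom_rel F (TetRel.qrel (F := F) (q := q)
      ⟨(i, i + 1), Or.inl (by ring)⟩ ⟨(i + 1, i + 1 + 1), Or.inl (by ring)⟩ rfl
      (by
        rintro ⟨h, -⟩
        rw [show i + 1 - i = (1 : ZMod 4) by ring] at h
        exact absurd h (by decide)))
    simpa [tg01, tg] using key
  | rel2 i =>
    have key := RingQuot.mkAlgHom_rel F (TetRel.serre (F := F) (q := q)
      i (i + 1) (i + 2) (i + 2 + 1) (by ring) (by ring) (by ring))
    simpa [tg01, tg] using key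

/-- There is a unique algebra homomorphism `□_q → ⊠_q` with `x_i ↦ x_{i,i+1}`, and it
intertwines the rotation automorphisms `ρ` of `□_q` and of `⊠_q`. -/
theorem stmt18 [IsAlgClosed F] [CharZero F] (q : F) (hq0 : q ≠ 0)
    (hq1 : ∀ n : ℕ, 0 < n → q ^ n ≠ 1) :
    (∃! f : BoxQ F q →ₐ[F] TetQ F q, ∀ i : ZMod 4, f (bx F q i) = tg01 F q i) ∧
    (∀ f : BoxQ F q →ₐ[F] TetQ F q, (∀ i : ZMod 4, f (bx F q i) = tg01 F q i) →
      ∀ ρB : BoxQ F q ≃ₐ[F] BoxQ F q, (∀ i : ZMod 4, ρB (bx F q i) = bx F q (i + 1)) →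
      ∀ ρT : TetQ F q ≃ₐ[F] TetQ F q, (∀ p : TIdx, ρT (tg F q p) = tg F q (tshift p)) →
      ∀ a : BoxQ F q, ρT (f a) = f (ρB a)) := by
  refine ⟨⟨RingQuot.liftAlgHom F ⟨FreeAlgebra.lift F (tg01 F q), fun _ _ h => tg01_respects F q h⟩,
    fun i => ?_, fun g hg => ?_⟩, ?_⟩
  · simp [bx]
  · apply BoxQ.algHom_ext
    intro i
    rw [hg]
    simp [bx]
  · intro f hf ρB hB ρT hT a
    have h : (ρT : TetQ F q →ₐ[F] TetQ F q).comp f = f.comp (ρB : BoxQ F q →ₐ[F] BoxQ F q) := by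
      apply BoxQ.algHom_ext
      intro i
      change ρT (f (bx F q i)) = f (ρB (bx F q i))
      rw [hf, hB, hf]
      exact hT _
    exact DFunLike.congr_fun h a
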